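/- The CM value of the hauptmodul of the Fricke group Γ₀*(10) at the point (3 + i)/10 equals -4: j₁₀*((3 + i)/10) = -4. Consequently, since the CM point (3+i)/10 is the root α_Q of the quadratic form Q = [10,-6,1] of discriminant -4, whose class 𝒬_{4,10}/Γ₀*(10) is a single orbit with |Γ̄₀*(10)_Q| = 4, and φ₂(j₁₀*) = (j₁₀*)² - 44, one has t₂^{(10*)}(4) = ((-4)² - 44)/4 = -7. -/

import Mathlib

open Complex Matrix

noncomputable section

/-- `SL(2, ℝ)`. -/
abbrev SL2R := Matrix.SpecialLinearGroup (Fin 2) ℝ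

/-- `q = e^{2πiz}` (also used as `ζ = e^{2πiz}`). -/
def qc (z : ℂ) : ℂ := Complex.exp (2 * Real.pi * Complex.I * z)

/-- The Dedekind eta function `η(z) = q^{1/24} ∏_{n ≥ 1} (1 - q^n)` (intended for `Im z > 0`). -/
def dedekindEta (z : ℂ) : ℂ :=
  Complex.exp (Real.pi * Complex.I * z / 12) *
    ∏' n : ℕ, (1 - Complex.exp (2 * Real.pi * Complex.I * ((n : ℂ) + 1) * z))

/-- The hauptmodul `j_N` of `Γ₀(N)` for `N ∈ {2, 3, 5, 7, 13, 6, 10}`. -/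
def jn (N : ℕ) (z : ℂ) : ℂ :=
  if N = 6 then (dedekindEta (2 * z) * dedekindEta (3 * z) ^ 3 / (dedekindEta z * dedekindEta (6 * z) ^ 3)) ^ 3 - 3
  else if N = 10 then dedekindEta (2 * z) * dedekindEta (5 * z) ^ 5 / (dedekindEta z * dedekindEta (10 * z) ^ 5) - 1
  else (dedekindEta z / dedekindEta ((N : ℂ) * z)) ^ (24 / (N - 1)) + 24 / ((N : ℂ) - 1)

/-- The hauptmodul `j_N^*` of the Fricke group `Γ₀^*(N)` for `N ∈ {2, 3, 5, 7, 13, 6, 10}`. -/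
def jnStar (N : ℕ) (z : ℂ) : ℂ :=
  if N = 6 then
    (dedekindEta z * dedekindEta (3 * z) / (dedekindEta (2 * z) * dedekindEta (6 * z))) ^ 6 + 6 +
      2 ^ 6 * (dedekindEta (2 * z) * dedekindEta (6 * z) / (dedekindEta z * dedekindEta (3 * z))) ^ 6
  else if N = 10 then
    (dedekindEta z * dedekindEta (5 * z) / (dedekindEta (2 * z) * dedekindEta (10 * z))) ^ 4 + 4 +
      2 ^ 4 * (dedekindEta (2 * z) * dedekindEta (10 * z) / (dedekindEta z * dedekindEta (5 * z))) ^ 4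
  else
    (dedekindEta z / dedekindEta ((N : ℂ) * z)) ^ (24 / (N - 1)) + 24 / ((N : ℂ) - 1) +
      (N : ℂ) ^ (12 / (N - 1)) * (dedekindEta ((N : ℂ) * z) / dedekindEta z) ^ (24 / (N - 1))

/-- `f` has the `q`-expansion `f(τ) = Σ_{n ≥ n₀} (a n) q^n` on the upper half-plane. -/
def HasQExp (f : ℂ → ℂ) (a : ℤ → ℂ) (n₀ : ℤ) : Prop :=
  (∀ n < n₀, a n = 0) ∧
    ∀ τ : ℂ, 0 < τ.im →
      HasSum (fun m : ℕ => a (n₀ + m) * qc τ ^ (n₀ + (m : ℤ))) (f τ)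

/-- `Γ₀(N)` viewed as a subgroup of `SL(2, ℝ)`. -/
def Gamma0SL2R (N : ℕ) : Subgroup SL2R :=
  (CongruenceSubgroup.Gamma0 N).map
    (Matrix.SpecialLinearGroup.map (Int.castRingHom ℝ))

/-- The set of Atkin–Lehner matrices `W_e` of level `N`:
`W_e = e^{-1/2} [[xe, y], [zN, we]]`, `x, y, z, w ∈ ℤ` (determinant `1` being automatic). -/
def atkinLehnerSet (N e : ℕ) : Set SL2R :=
  { g | ∃ x y z w : ℤ,
      g.1 = (Real.sqrt e)⁻¹ • !![(x : ℝ) * e, (y : ℝ); (z : ℝ) * N, (w : ℝ) * e] }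

/-- The Fricke group `Γ₀^*(N)`, generated by `Γ₀(N)` and all Atkin–Lehner involutions `W_e`
for `e ∣ N` with `gcd(e, N/e) = 1`. -/
def FrickeGroup (N : ℕ) : Subgroup SL2R :=
  Subgroup.closure
    ((Gamma0SL2R N : Set SL2R) ∪
      ⋃ e ∈ {e : ℕ | e ∣ N ∧ Nat.Coprime e (N / e)}, atkinLehnerSet N e)

/-- The Gram matrix of the integral binary quadratic form `[a, b, c]`. -/
def formMat (a b c : ℤ) : Matrix (Fin 2) (Fin 2) ℝ :=
  !![(a : ℝ), (b : ℝ) / 2; (b : ℝ) / 2, (c : ℝ)]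

/-- `𝒬_{d,N}`: positive definite integral binary quadratic forms `[a, b, c]` of
discriminant `-d` with `N ∣ a`. -/
def QdN (d : ℤ) (N : ℕ) : Set (Matrix (Fin 2) (Fin 2) ℝ) :=
  { M | ∃ a b c : ℤ, M = formMat a b c ∧ 0 < a ∧ b ^ 2 - 4 * a * c = -d ∧ (N : ℤ) ∣ a }

/-- `𝒬_{d,N,h}`: members of `𝒬_{d,N}` with `b ≡ h (mod 2N)`. -/
def QdNh (d : ℤ) (N : ℕ) (h : ℤ) : Set (Matrix (Fin 2) (Fin 2) ℝ) :=
  { M | ∃ a b c : ℤ, M = formMat a b c ∧ 0 < a ∧ b ^ 2 - 4 * a * c = -d ∧ (N : ℤ) ∣ a ∧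
      (b : ZMod (2 * N)) = (h : ZMod (2 * N)) }

/-- Orbit relation of the (right) action `Q ↦ Q ∘ g`, i.e. `M ↦ gᵀ M g`, of `Γ ≤ SL(2, ℝ)`
on a set `S` of Gram matrices of quadratic forms. -/
def formRel (Γ : Subgroup SL2R) (S : Set (Matrix (Fin 2) (Fin 2) ℝ)) (Q Q' : S) : Prop :=
  ∃ g ∈ Γ, Q'.1 = (g.1)ᵀ * Q.1 * g.1

/-- The CM point `α_Q` of a positive definite form (as a point of `ℂ`; it lies in the upper
half-plane): `α_Q = (-b + i √d) / (2a) = (-(b/2) + i √(det M)) / a`. -/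
def cmPointC (M : Matrix (Fin 2) (Fin 2) ℝ) : ℂ :=
  ((-(M 0 1) : ℝ) + Complex.I * Real.sqrt M.det) / ((M 0 0 : ℝ) : ℂ)

/-- The order of the stabilizer of the form `M` in `Γ/{±1}` (the stabilizer in `Γ` contains
`±1` and has twice the cardinality). -/
def stabOrder (Γ : Subgroup SL2R) (M : Matrix (Fin 2) (Fin 2) ℝ) : ℕ :=
  Nat.card { g : SL2R // g ∈ Γ ∧ (g.1)ᵀ * M * g.1 = M } / 2

/-- The modular trace `Σ_{Q ∈ S/Γ} f(α_Q) / |Γ̄_Q|`. -/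
def classTrace (Γ : Subgroup SL2R) (f : ℂ → ℂ)
    (S : Set (Matrix (Fin 2) (Fin 2) ℝ)) : ℂ :=
  ∑ᶠ O : Quot (formRel Γ S),
    f (cmPointC (Quot.out O).1) / (stabOrder Γ (Quot.out O).1 : ℂ)

/-- `t₂^{(N*)}(d)`, where `P` is the polynomial with `φ₂(j_N^*) = P(j_N^*)`;
includes the paper's conventions at nonpositive indices. -/
def t2Star (N : ℕ) (P : Polynomial ℂ) (d : ℤ) : ℂ :=
  if 0 < d then
    classTrace (FrickeGroup N) (fun z => Polynomial.eval (jnStar N z) P) (QdN d N)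
  else if d = 0 then (if N = 2 then 5 else if N = 6 ∨ N = 10 then 5 / 2 else 3)
  else if d = -1 then -1
  else if d = -4 then -2
  else 0

/-- `σ₁^{(N)}(x) = Σ_{d ∣ x, N ∤ d} d` for `x ∈ ℤ_{>0}`, `(N-1)/24` at `x = 0`, and `0`
off `ℤ_{≥0}`. -/
def sigmaN (N : ℕ) (x : ℚ) : ℂ :=
  if x = 0 then ((N : ℂ) - 1) / 24
  else if 0 < x ∧ x.den = 1 then
    ∑ d ∈ (Nat.divisors x.num.toNat).filter (fun d => ¬ N ∣ d), (d : ℂ)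
  else 0

/-- `σ₁(x) = Σ_{d ∣ x} d` for `x ∈ ℤ_{>0}` and `0` otherwise. -/
def sigmaQ (x : ℚ) : ℂ :=
  if 0 < x ∧ x.den = 1 then ∑ d ∈ Nat.divisors x.num.toNat, (d : ℂ) else 0

/-- A weakly holomorphic Jacobi form of weight `k` and index `m`. -/
structure WeakJacobiForm (k : ℤ) (m : ℕ) where
  toFun : ℂ → ℂ → ℂ
  holo : DifferentiableOn ℂ (fun p : ℂ × ℂ => toFun p.1 p.2)
      ({τ : ℂ | 0 < τ.im} ×ˢ (Set.univ : Set ℂ))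
  slash_inv : ∀ a b c d : ℤ, a * d - b * c = 1 → ∀ τ z : ℂ, 0 < τ.im →
    ((c : ℂ) * τ + d) ^ (-k) *
        Complex.exp (-(2 * Real.pi * Complex.I * m * c * z ^ 2) / ((c : ℂ) * τ + d)) *
        toFun (((a : ℂ) * τ + b) / ((c : ℂ) * τ + d)) (z / ((c : ℂ) * τ + d)) =
      toFun τ z
  elliptic : ∀ lm mu : ℤ, ∀ τ z : ℂ, 0 < τ.im →
    Complex.exp (2 * Real.pi * Complex.I * m * ((lm : ℂ) ^ 2 * τ + 2 * lm * z)) *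
        toFun τ (z + lm * τ + mu) = toFun τ z
  coeff : ℤ → ℤ → ℂ
  coeff_neg_finite : {n : ℤ | n < 0 ∧ ∃ r : ℤ, coeff n r ≠ 0}.Finite
  expansion : ∀ τ z : ℂ, 0 < τ.im →
    HasSum (fun p : ℤ × ℤ => coeff p.1 p.2 * qc τ ^ p.1 * qc z ^ p.2) (toFun τ z)

/-- Meromorphy of weight `k` at all cusps: at each cusp `γ∞`, the function `F|_k γ` has a
Fourier expansion in fractional powers of `q` with only finitely many negative terms. -/
def MeromAtCusps (k : ℤ) (F : ℂ → ℂ) : Prop :=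
  ∀ a b c d : ℤ, a * d - b * c = 1 →
    ∃ (M : ℕ) (cs : ℤ → ℂ) (n₀ : ℤ), 0 < M ∧
      ∀ τ : ℂ, 0 < τ.im →
        HasSum
          (fun j : ℕ => cs (n₀ + j) *
            Complex.exp (2 * Real.pi * Complex.I * τ / M) ^ (n₀ + (j : ℤ)))
          (((c : ℂ) * τ + d) ^ (-k) * F (((a : ℂ) * τ + b) / ((c : ℂ) * τ + d)))

/-- The Möbius action of an element of `SL(2, ℝ)` on `ℂ`. -/
def moebius (g : SL2R) (z : ℂ) : ℂ :=
  ((g.1 0 0 : ℝ) * z + ((g.1 0 1 : ℝ) : ℂ)) / ((g.1 1 0 : ℝ) * z + ((g.1 1 1 : ℝ) : ℂ))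

/-- A weakly holomorphic modular function on `Γ`: holomorphic on the upper half-plane,
`Γ`-invariant, with poles only at the cusps. -/
def IsWeaklyHolModularFn (Γ : Subgroup SL2R) (f : ℂ → ℂ) : Prop :=
  DifferentiableOn ℂ f {z : ℂ | 0 < z.im} ∧
    (∀ g ∈ Γ, ∀ z : ℂ, 0 < z.im → f (moebius g z) = f z) ∧
    MeromAtCusps 0 f

/-- The set `L_{h, d/4N}` of vectors
`X = [[b + h/2N, c/N], [-a, -(b + h/2N)]]`, `a, b, c ∈ ℤ`, of norm `q(X) = d/4N`. -/
def LhSet (N : ℕ) (h d : ℤ) : Set (Matrix (Fin 2) (Fin 2) ℝ) :=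
  { X | ∃ a b c : ℤ,
      X = !![(b : ℝ) + (h : ℝ) / (2 * N), (c : ℝ) / N;
             -(a : ℝ), -((b : ℝ) + (h : ℝ) / (2 * N))] ∧
      (2 * b * N + h) ^ 2 - 4 * a * c * N = -d }

/-- The map `X ↦ N ⬝ [[0,-1],[1,0]] ⬝ X` from vectors to Gram matrices of quadratic forms. -/
def vecToForm (N : ℕ) (X : Matrix (Fin 2) (Fin 2) ℝ) : Matrix (Fin 2) (Fin 2) ℝ :=
  (N : ℝ) • (!![(0 : ℝ), -1; 1, 0] * X)

/-- Orbit relation of `Γ` acting by conjugation `g.X = g X g⁻¹` on a set `S` of vectors. -/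
def vecRel (Γ : Subgroup SL2R) (S : Set (Matrix (Fin 2) (Fin 2) ℝ)) (X X' : S) : Prop :=
  ∃ g ∈ Γ, X'.1 = g.1 * X.1 * (g⁻¹).1

/-- The Heegner point `D_X ∈ ℍ` of a vector `X` of positive norm. -/
def heegnerC (X : Matrix (Fin 2) (Fin 2) ℝ) : ℂ :=
  ((X 0 0 / X 1 0 : ℝ) : ℂ) + Complex.I * Real.sqrt (X.det / (X 1 0) ^ 2)

/-- The order of the stabilizer of the vector `X` in `Γ/{±1}`. -/
def vecStabOrder (Γ : Subgroup SL2R) (X : Matrix (Fin 2) (Fin 2) ℝ) : ℕ :=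
  Nat.card { g : SL2R // g ∈ Γ ∧ g.1 * X * (g⁻¹).1 = X } / 2

/-- The modular trace `t_f(h, m) = Σ_{X ∈ Γ\L_{h,m}} f(D_X) / |Γ̄_X|`. -/
def vecTrace (Γ : Subgroup SL2R) (f : ℂ → ℂ) (S : Set (Matrix (Fin 2) (Fin 2) ℝ)) : ℂ :=
  ∑ᶠ O : Quot (vecRel Γ S), f (heegnerC (Quot.out O).1) / (vecStabOrder Γ (Quot.out O).1 : ℂ)

/-- The weight-2 Eisenstein series `E₂(z) = 1 - 24 Σ_{n ≥ 1} σ₁(n) qⁿ`. -/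
def E2 (z : ℂ) : ℂ :=
  1 - 24 * ∑' n : ℕ, (∑ d ∈ Nat.divisors (n + 1), (d : ℂ)) * qc z ^ (n + 1)

/-- `E₂^{(N)}(z) = N E₂(Nz) - E₂(z)`. -/
def E2N (N : ℕ) (z : ℂ) : ℂ := (N : ℂ) * E2 ((N : ℂ) * z) - E2 z

end

open ModularForm UpperHalfPlane Real in
/-- `dedekindEta` agrees with Mathlib's eta function. -/
lemma dedekindEta_eq_eta (z : ℂ) : dedekindEta z = ModularForm.eta z := by
  unfold dedekindEta ModularForm.eta
  congr 1
  · rw [Function.Periodic.qParam]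
    congr 1
    push_cast
    ring
  · exact tprod_congr fun n => by rw [eta_q_eq_cexp]

lemma dedekindEta_ne_zero {z : ℂ} (hz : 0 < z.im) : dedekindEta z ≠ 0 := by
  rw [dedekindEta_eq_eta]
  exact ModularForm.eta_ne_zero hz

/-- The sixth root of unity `e^{πin/3}`. -/
noncomputable def sixthRoot (n : ℤ) : ℂ := Complex.exp (Real.pi * Complex.I / 3 * n)

lemma sixthRoot_add (m n : ℤ) : sixthRoot (m + n) = sixthRoot m * sixthRoot n := by
  rw [sixthRoot, sixthRoot, sixthRoot, ← Complex.exp_add]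
  congr 1
  push_cast
  ring

lemma sixthRoot_ne_zero (n : ℤ) : sixthRoot n ≠ 0 := Complex.exp_ne_zero _

lemma sixthRoot_eq_of_modEq {m n : ℤ} (h : (m : ZMod 6) = n) : sixthRoot m = sixthRoot n := by
  obtain ⟨k, hk⟩ := (ZMod.intCast_eq_intCast_iff_dvd_sub m n 6).1 h
  have hk' : (n : ℂ) = m + 6 * k := by
    have : n = m + 6 * k := by push_cast at hk; linarith
    exact_mod_cast this
  rw [sixthRoot, sixthRoot, Complex.exp_eq_exp_iff_exists_int]
  refine ⟨-k, ?_⟩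
  rw [hk']
  push_cast
  ring

lemma sixthRoot_zero : sixthRoot 0 = 1 := by simp [sixthRoot]

lemma sixthRoot_three : sixthRoot 3 = -1 := by
  rw [sixthRoot, ← Complex.exp_pi_mul_I]
  congr 1
  push_cast
  ring

lemma dedekindEta_pow_four_add_intCast (k : ℤ) (z : ℂ) :
    dedekindEta (z + k) ^ 4 = sixthRoot k * dedekindEta z ^ 4 := by
  have hprod : ∀ n : ℕ, Complex.exp (2 * Real.pi * Complex.I * ((n : ℂ) + 1) * (z + k)) =
      Complex.exp (2 * Real.pi * Complex.I * ((n : ℂ) + 1) * z) := fun n => by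
    rw [Complex.exp_eq_exp_iff_exists_int]
    exact ⟨(n + 1) * k, by push_cast; ring⟩
  simp only [dedekindEta, hprod, mul_pow, ← Complex.exp_nat_mul, sixthRoot]
  rw [← mul_assoc, ← Complex.exp_add]
  congr 2
  push_cast
  ring

lemma dedekindEta_pow_four_neg_inv {z : ℂ} (hz : 0 < z.im) :
    dedekindEta (-1 / z) ^ 4 = -z ^ 2 * dedekindEta z ^ 4 := by
  have h := ModularForm.eta_comp_eq_csqrt_I_inv (show z ∈ UpperHalfPlane.upperHalfPlaneSet from hz)
  have hsqrt (w : ℂ) : Complex.sqrt w ^ 4 = w ^ 2 := by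
    rw [show 4 = 2 * 2 from rfl, pow_mul, Complex.sqrt, ← Complex.cpow_nat_mul]
    norm_num
  simp only [Function.comp_apply, Pi.smul_apply, Pi.mul_apply, smul_eq_mul] at h
  rw [dedekindEta_eq_eta, dedekindEta_eq_eta, h, mul_pow, mul_pow, inv_pow, hsqrt, hsqrt,
    Complex.I_sq]
  ring

/-- The exponent (modulo `6`) of the multiplier of `η⁴` at `[[a, b], [c, d]]`. -/
def etaExponent {R : Type*} [CommRing R] (a b c d : R) : R :=
  (a + d) * c - b * d * (c ^ 2 - 1) - 3 * c

lemma etaExponent_intCast (a b c d : ℤ) :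
    ((etaExponent a b c d : ℤ) : ZMod 6) = etaExponent (a : ZMod 6) b c d := by
  simp [etaExponent]

lemma etaExponent_translate (a b c d : ZMod 6) (h : a * d - b * c = 1) :
    etaExponent (a + c) (b + d) c d = 1 + etaExponent a b c d := by
  revert a b c d
  simp only [etaExponent]
  decide +kernel

lemma etaExponent_invert (a b c d : ZMod 6) (h : a * d - b * c = 1) :
    etaExponent (-c) (-d) a b = 3 + etaExponent a b c d := by
  revert a b c d
  simp only [etaExponent]
  decide +kernel

/-- `η⁴` transforms with weight `2` and its multiplier under `[[a, b], [c, d]]`. -/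
def EtaTransforms (a b c d : ℤ) : Prop :=
  ∀ z : ℂ, 0 < z.im →
    dedekindEta ((a * z + b) / (c * z + d)) ^ 4 =
      sixthRoot (etaExponent a b c d) * (c * z + d) ^ 2 * dedekindEta z ^ 4

lemma linear_ne_zero {c d : ℝ} (h : c ≠ 0 ∨ d ≠ 0) {z : ℂ} (hz : 0 < z.im) :
    (c : ℂ) * z + d ≠ 0 := by
  intro h0
  have him := congrArg Complex.im h0
  have hre := congrArg Complex.re h0
  simp at him hre
  rcases him with hc | hz0
  · simp [hc] at hre h
    exact h hre
  · exact hz.ne' hz0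

lemma intLinear_ne_zero {a b c d : ℤ} (h : a * d - b * c = 1) {z : ℂ} (hz : 0 < z.im) :
    (c : ℂ) * z + d ≠ 0 := by
  have := linear_ne_zero (c := c) (d := d) (z := z) (by
    by_contra! h0
    have hc : c = 0 := by exact_mod_cast h0.1
    have hd : d = 0 := by exact_mod_cast h0.2
    simp [hc, hd] at h) hz
  simpa using this

lemma moebius_im_pos {a b c d : ℤ} (h : a * d - b * c = 1) {z : ℂ} (hz : 0 < z.im) :
    0 < (((a : ℂ) * z + b) / (c * z + d)).im := by
  have hne := intLinear_ne_zero h hz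
  have hdet : (a : ℝ) * d - b * c = 1 := by exact_mod_cast h
  have heq : (((a : ℂ) * z + b) / (c * z + d)).im =
      z.im / Complex.normSq ((c : ℂ) * z + d) := by
    rw [Complex.div_im]
    simp
    rw [← sub_div]
    congr 1
    linear_combination z.im * hdet
  rw [heq]
  exact div_pos hz (Complex.normSq_pos.2 hne)

lemma EtaTransforms.translate {a b c d : ℤ} (h : a * d - b * c = 1)
    (H : EtaTransforms a b c d) (k : ℤ) (hk : (k : ZMod 6) + etaExponent (a : ZMod 6) b c d =
      etaExponent ((a + k * c : ℤ) : ZMod 6) ((b + k * d : ℤ) : ZMod 6) c d) :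
    EtaTransforms (a + k * c) (b + k * d) c d := by
  intro z hz
  have hne := intLinear_ne_zero h hz
  have hz' : (((a + k * c : ℤ) : ℂ) * z + ((b + k * d : ℤ) : ℂ)) / (c * z + d) =
      ((a : ℂ) * z + b) / (c * z + d) + k := by
    push_cast
    field_simp
    ring
  rw [hz', dedekindEta_pow_four_add_intCast, H z hz, ← mul_assoc, ← mul_assoc, ← sixthRoot_add]
  congr 2
  apply sixthRoot_eq_of_modEq
  rw [Int.cast_add, etaExponent_intCast, etaExponent_intCast, hk]

lemma EtaTransforms.invert {a b c d : ℤ} (h : a * d - b * c = 1)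
    (H : EtaTransforms a b c d) : EtaTransforms (-c) (-d) a b := by
  intro z hz
  have hne := intLinear_ne_zero h hz
  have hne' : (a : ℂ) * z + b ≠ 0 :=
    intLinear_ne_zero (a := -c) (b := -d) (by linarith) hz
  have hz' : (((-c : ℤ) : ℂ) * z + ((-d : ℤ) : ℂ)) / (a * z + b) =
      -1 / (((a : ℂ) * z + b) / (c * z + d)) := by
    push_cast
    field_simp
    ring
  have hroot : sixthRoot (etaExponent (-c) (-d) a b) = -sixthRoot (etaExponent a b c d) := by
    rw [← neg_one_mul (sixthRoot _), ← sixthRoot_three, ← sixthRoot_add]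
    apply sixthRoot_eq_of_modEq
    rw [Int.cast_add, etaExponent_intCast, etaExponent_intCast]
    push_cast
    exact etaExponent_invert _ _ _ _ (by exact_mod_cast congrArg (Int.cast : ℤ → ZMod 6) h)
  rw [hz', dedekindEta_pow_four_neg_inv (moebius_im_pos h hz), H z hz, hroot]
  have hcancel : (((a : ℂ) * z + b) / (c * z + d)) ^ 2 * (c * z + d) ^ 2 = (a * z + b) ^ 2 := by
    rw [div_pow, div_mul_cancel₀ _ (pow_ne_zero 2 hne)]
  linear_combination -sixthRoot (etaExponent a b c d) * dedekindEta z ^ 4 * hcancel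

lemma EtaTransforms.neg {a b c d : ℤ} (H : EtaTransforms a b c d) :
    EtaTransforms (-a) (-b) (-c) (-d) := by
  intro z hz
  have hz' : (((-a : ℤ) : ℂ) * z + ((-b : ℤ) : ℂ)) / (((-c : ℤ) : ℂ) * z + ((-d : ℤ) : ℂ)) =
      ((a : ℂ) * z + b) / (c * z + d) := by
    rw [← neg_div_neg_eq]
    push_cast
    ring
  have hroot : sixthRoot (etaExponent (-a) (-b) (-c) (-d)) = sixthRoot (etaExponent a b c d) := by
    apply sixthRoot_eq_of_modEq
    rw [ZMod.intCast_eq_intCast_iff_dvd_sub]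
    exact ⟨-c, by simp only [etaExponent]; push_cast; ring⟩
  rw [hz', H z hz, hroot]
  push_cast
  ring

lemma etaTransforms_of_det_eq_one {a b c d : ℤ} (h : a * d - b * c = 1) :
    EtaTransforms a b c d := by
  have key : ∀ γ : Matrix.SpecialLinearGroup (Fin 2) ℤ,
      EtaTransforms (γ.1 0 0) (γ.1 0 1) (γ.1 1 0) (γ.1 1 1) := by
    intro γ
    have hγ : γ ∈ Subgroup.closure {ModularGroup.S, ModularGroup.T} := by
      simp [SpecialLinearGroup.SL2Z_generators]
    have hdet (γ : Matrix.SpecialLinearGroup (Fin 2) ℤ) :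
        γ.1 0 0 * γ.1 1 1 - γ.1 0 1 * γ.1 1 0 = 1 := by
      rw [← Matrix.det_fin_two]
      exact γ.2
    induction hγ using Subgroup.closure_induction_left with
    | one =>
      intro z hz
      simp [etaExponent, sixthRoot_zero]
    | mul_left x hx y _ ih =>
      rcases hx with rfl | rfl
      · convert ih.invert (hdet y) using 1 <;>
          simp [ModularGroup.coe_S, Matrix.mul_apply, Fin.sum_univ_two]
      · convert ih.translate (hdet y) 1 ?_ using 1
        · simp [ModularGroup.coe_T, Matrix.mul_apply, Fin.sum_univ_two]
        · simp [ModularGroup.coe_T, Matrix.mul_apply, Fin.sum_univ_two]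
        · simp
        · simp
        · push_cast
          simp only [one_mul]
          exact (etaExponent_translate _ _ _ _
            (by exact_mod_cast congrArg (Int.cast : ℤ → ZMod 6) (hdet y))).symm
    | inv_mul_cancel x hx y _ ih =>
      rcases hx with rfl | rfl
      · convert (ih.invert (hdet y)).neg using 1 <;>
          simp [ModularGroup.coe_S, Matrix.mul_apply, Fin.sum_univ_two, Matrix.adjugate_fin_two]
      · convert ih.translate (hdet y) (-1) ?_ using 1
        · simp [ModularGroup.coe_T, Matrix.mul_apply, Fin.sum_univ_two, Matrix.adjugate_fin_two]
        · simp [ModularGroup.coe_T, Matrix.mul_apply, Fin.sum_univ_two, Matrix.adjugate_fin_two]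
        · simp
        · simp
        · have hy : ((y.1 0 0 : ℤ) : ZMod 6) * (y.1 1 1 : ℤ) - (y.1 0 1 : ℤ) * (y.1 1 0 : ℤ) = 1 := by
            exact_mod_cast congrArg (Int.cast : ℤ → ZMod 6) (hdet y)
          have := etaExponent_translate ((y.1 0 0 : ℤ) - (y.1 1 0 : ℤ) : ZMod 6)
            ((y.1 0 1 : ℤ) - (y.1 1 1 : ℤ)) (y.1 1 0 : ℤ) (y.1 1 1 : ℤ) (by linear_combination hy)
          rw [sub_add_cancel, sub_add_cancel] at this
          push_cast
          rw [this, neg_one_mul, neg_one_mul, ← sub_eq_add_neg, ← sub_eq_add_neg]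
          ring
  exact key ⟨!![a, b; c, d], by rw [Matrix.det_fin_two_of]; exact h⟩

/-- The eta quotient `(η(z)η(5z)/(η(2z)η(10z)))⁴` of level `10`. -/
noncomputable def etaQuotient (z : ℂ) : ℂ :=
  (dedekindEta z * dedekindEta (5 * z) / (dedekindEta (2 * z) * dedekindEta (10 * z))) ^ 4

lemma jnStar_ten_eq (z : ℂ) :
    jnStar 10 z = etaQuotient z + 4 + 2 ^ 4 * (etaQuotient z)⁻¹ := by
  simp [jnStar, etaQuotient, ← inv_pow, inv_div]

lemma etaQuotient_eq (z : ℂ) :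
    etaQuotient z = dedekindEta z ^ 4 * dedekindEta (5 * z) ^ 4 /
      (dedekindEta (2 * z) ^ 4 * dedekindEta (10 * z) ^ 4) := by
  rw [etaQuotient, div_pow, mul_pow, mul_pow]

lemma im_natCast_mul_pos {z : ℂ} (hz : 0 < z.im) (n : ℕ) [NeZero n] : 0 < ((n : ℂ) * z).im := by
  have : (0 : ℝ) < n := by exact_mod_cast Nat.pos_of_neZero n
  simpa using mul_pos this hz

lemma etaQuotient_gamma0 {a b c d : ℤ} (h : a * d - b * (10 * c) = 1) {z : ℂ} (hz : 0 < z.im) :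
    etaQuotient ((a * z + b) / (10 * c * z + d)) = etaQuotient z := by
  have hz2 : 0 < (2 * z).im := im_natCast_mul_pos hz 2
  have hz5 : 0 < (5 * z).im := im_natCast_mul_pos hz 5
  have hz10 : 0 < (10 * z).im := im_natCast_mul_pos hz 10
  have h1 := etaTransforms_of_det_eq_one h z hz
  have h2 := etaTransforms_of_det_eq_one (a := a) (b := 2 * b) (c := 5 * c) (d := d)
    (by linarith) _ hz2
  have h5 := etaTransforms_of_det_eq_one (a := a) (b := 5 * b) (c := 2 * c) (d := d)
    (by linarith) _ hz5
  have h10 := etaTransforms_of_det_eq_one (a := a) (b := 10 * b) (c := c) (d := d)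
    (by linarith) _ hz10
  have hroot : sixthRoot (etaExponent a b (10 * c) d) * sixthRoot (etaExponent a (5 * b) (2 * c) d)
      = sixthRoot (etaExponent a (2 * b) (5 * c) d) * sixthRoot (etaExponent a (10 * b) c d) := by
    rw [← sixthRoot_add, ← sixthRoot_add]
    apply sixthRoot_eq_of_modEq
    rw [ZMod.intCast_eq_intCast_iff_dvd_sub]
    exact ⟨-(a + d) * c + b * d * (10 * c ^ 2 + 1) + 3 * c, by
      simp only [etaExponent]; push_cast; ring⟩
  have hne : (10 * c * z + d : ℂ) ≠ 0 := by simpa using intLinear_ne_zero h hz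
  push_cast at h1 h2 h5 h10
  rw [show 5 * c * (2 * z) + d = 10 * c * z + d by ring,
    show (a : ℂ) * (2 * z) + 2 * b = 2 * (a * z + b) by ring, mul_div_assoc] at h2
  rw [show 2 * c * (5 * z) + d = 10 * c * z + d by ring,
    show (a : ℂ) * (5 * z) + 5 * b = 5 * (a * z + b) by ring, mul_div_assoc] at h5
  rw [show c * (10 * z) + d = 10 * c * z + d by ring,
    show (a : ℂ) * (10 * z) + 10 * b = 10 * (a * z + b) by ring, mul_div_assoc] at h10
  rw [etaQuotient_eq, etaQuotient_eq, h1, h2, h5, h10, div_eq_div_iff]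
  · linear_combination (10 * c * z + d : ℂ) ^ 4 * dedekindEta z ^ 4 * dedekindEta (5 * z) ^ 4 *
      dedekindEta (2 * z) ^ 4 * dedekindEta (10 * z) ^ 4 * hroot
  · simp [sixthRoot_ne_zero, hne, dedekindEta_ne_zero hz2, dedekindEta_ne_zero hz10]
  · simp [dedekindEta_ne_zero hz2, dedekindEta_ne_zero hz10]

lemma etaQuotient_atkinLehner_five {x y v w : ℤ} (h : 5 * x * w - 2 * y * v = 1) {z : ℂ}
    (hz : 0 < z.im) :
    etaQuotient ((5 * x * z + y) / (10 * v * z + 5 * w)) = etaQuotient z := by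
  have hz2 : 0 < (2 * z).im := im_natCast_mul_pos hz 2
  have hz5 : 0 < (5 * z).im := im_natCast_mul_pos hz 5
  have hz10 : 0 < (10 * z).im := im_natCast_mul_pos hz 10
  have h1 := etaTransforms_of_det_eq_one (a := x) (b := y) (c := 2 * v) (d := 5 * w)
    (by linarith) _ hz5
  have h2 := etaTransforms_of_det_eq_one (a := x) (b := 2 * y) (c := v) (d := 5 * w)
    (by linarith) _ hz10
  have hdet5 : 5 * x * w - y * (2 * v) = 1 := by linarith
  have h5 := etaTransforms_of_det_eq_one hdet5 z hz
  have h10 := etaTransforms_of_det_eq_one (a := 5 * x) (b := 2 * y) (c := v) (d := w)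
    (by linarith) _ hz2
  have hroot : sixthRoot (etaExponent x y (2 * v) (5 * w)) *
        sixthRoot (etaExponent (5 * x) y (2 * v) w) =
      sixthRoot (etaExponent x (2 * y) v (5 * w)) * sixthRoot (etaExponent (5 * x) (2 * y) v w) := by
    rw [← sixthRoot_add, ← sixthRoot_add]
    apply sixthRoot_eq_of_modEq
    rw [ZMod.intCast_eq_intCast_iff_dvd_sub]
    exact ⟨-(x + w) * v + y * w * (2 * v ^ 2 + 1) + v, by
      simp only [etaExponent]; push_cast; ring⟩
  have hne : (2 * v * z + w : ℂ) ≠ 0 := by simpa using intLinear_ne_zero hdet5 hz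
  have hden : (10 * v * z + 5 * w : ℂ) = 5 * (2 * v * z + w) := by ring
  push_cast at h1 h2 h5 h10
  rw [show (2 * v * (5 * z) + 5 * w : ℂ) = 5 * (2 * v * z + w) by ring,
    show (x : ℂ) * (5 * z) + y = 5 * x * z + y by ring] at h1
  rw [show v * (10 * z) + 5 * w = 5 * (2 * v * z + w) by ring,
    show (x : ℂ) * (10 * z) + 2 * y = 2 * (5 * x * z + y) by ring, mul_div_assoc] at h2
  rw [show (5 * x * z + y : ℂ) / (2 * v * z + w) =
    5 * ((5 * x * z + y) / (5 * (2 * v * z + w))) by field_simp] at h5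
  rw [show (5 * x * (2 * z) + 2 * y : ℂ) / (v * (2 * z) + w) =
    10 * ((5 * x * z + y) / (5 * (2 * v * z + w))) by
      rw [show (v * (2 * z) + w : ℂ) = 2 * v * z + w by ring]; field_simp; ring,
    show (v * (2 * z) + w : ℂ) = 2 * v * z + w by ring] at h10
  rw [hden, etaQuotient_eq, etaQuotient_eq, h1, h2, h5, h10, div_eq_div_iff]
  · linear_combination 25 * (2 * v * z + w : ℂ) ^ 4 * dedekindEta z ^ 4 * dedekindEta (5 * z) ^ 4 *
      dedekindEta (2 * z) ^ 4 * dedekindEta (10 * z) ^ 4 * hroot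
  · simp [sixthRoot_ne_zero, hne, dedekindEta_ne_zero hz2, dedekindEta_ne_zero hz10]
  · simp [dedekindEta_ne_zero hz2, dedekindEta_ne_zero hz10]

lemma etaQuotient_cmPoint : etaQuotient ((3 + Complex.I) / 10) = -4 := by
  have hI : 0 < Complex.I.im := by simp
  have h1 := etaTransforms_of_det_eq_one (a := 1) (b := 0) (c := 3) (d := 1) (by norm_num) _ hI
  have h2 := etaTransforms_of_det_eq_one (a := 1) (b := 1) (c := 1) (d := 2) (by norm_num) _ hI
  have h5 := etaTransforms_of_det_eq_one (a := 2) (b := 1) (c := 1) (d := 1) (by norm_num) _ hI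
  have h10 := etaTransforms_of_det_eq_one (a := 1) (b := 3) (c := 0) (d := 1) (by norm_num) _ hI
  have hroot : sixthRoot (-3) = -1 := by
    rw [← sixthRoot_three]
    exact sixthRoot_eq_of_modEq (by decide)
  have hsq := Complex.I_sq
  have ne1 : 3 * Complex.I + 1 ≠ 0 := by
    simpa using linear_ne_zero (c := 3) (d := 1) (by norm_num) hI
  have ne2 : Complex.I + 2 ≠ 0 := by
    simpa using linear_ne_zero (c := 1) (d := 2) (by norm_num) hI
  have ne5 : Complex.I + 1 ≠ 0 := by
    simpa using linear_ne_zero (c := 1) (d := 1) (by norm_num) hI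
  have ne := dedekindEta_ne_zero hI
  norm_num [etaExponent, sixthRoot_zero, sixthRoot_three, hroot] at h1 h2 h5 h10
  rw [show Complex.I / (3 * Complex.I + 1) = (3 + Complex.I) / 10 by
    rw [div_eq_iff ne1]; linear_combination (-3 / 10 : ℂ) * hsq] at h1
  rw [show (Complex.I + 1) / (Complex.I + 2) = 2 * ((3 + Complex.I) / 10) by
    rw [div_eq_iff ne2]; linear_combination (-1 / 5 : ℂ) * hsq] at h2
  rw [show (2 * Complex.I + 1) / (Complex.I + 1) = 5 * ((3 + Complex.I) / 10) by
    rw [div_eq_iff ne5]; linear_combination (-1 / 2 : ℂ) * hsq] at h5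
  rw [show Complex.I + 3 = 10 * ((3 + Complex.I) / 10) by ring] at h10
  rw [etaQuotient_eq, h1, h2, h5, h10, div_eq_iff (by simp [ne, ne2])]
  linear_combination dedekindEta Complex.I ^ 8 *
    (-(9 * Complex.I ^ 2 + 24 * Complex.I + 17)) * hsq

/-- A positive definite binary form of determinant `1` is the pullback of the sum of two squares
under a matrix of determinant `1`. -/
lemma exists_sum_two_squares_of_det_eq_one (a β c : ℤ) (ha : 0 < a) (h : a * c - β ^ 2 = 1) :
    ∃ p q r s : ℤ, a = p ^ 2 + q ^ 2 ∧ β = p * r + q * s ∧ c = r ^ 2 + s ^ 2 ∧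
      p * s - q * r = 1 := by
  induction hn : β.natAbs using Nat.strong_induction_on generalizing a β c with
  | _ n ih =>
    have hc : 0 < c := by nlinarith [sq_nonneg β]
    rcases eq_or_ne β 0 with rfl | hβ
    · have hac : a * c = 1 := by linarith
      have ha1 : a = 1 := by
        rcases Int.eq_one_or_neg_one_of_mul_eq_one hac with h | h <;> omega
      subst ha1
      exact ⟨1, 0, 0, 1, by norm_num, by norm_num, by linarith, by norm_num⟩
    · obtain ⟨ε, hε', hβε⟩ : ∃ ε : ℤ, (ε = 1 ∨ ε = -1) ∧ 0 < ε * β := by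
        rcases lt_or_gt_of_ne hβ with hneg | hpos
        · exact ⟨-1, .inr rfl, by linarith⟩
        · exact ⟨1, .inl rfl, by linarith⟩
      have hε : ε ^ 2 = 1 := by rcases hε' with rfl | rfl <;> norm_num
      have hsq : (ε * β) ^ 2 = β ^ 2 := by rw [mul_pow, hε, one_mul]
      have hle : a ≤ ε * β ∨ c ≤ ε * β := by
        by_contra! hcon
        nlinarith
      rcases hle with hle | hle
      · obtain ⟨p, q, r, s, h1, h2, h3, h4⟩ := ih (β - ε * a).natAbs
          (by rcases hε' with rfl | rfl <;> omega) a (β - ε * a) (c - 2 * ε * β + a) ha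
          (by linear_combination h - a ^ 2 * hε) rfl
        refine ⟨p, q, r + ε * p, s + ε * q, h1, ?_, ?_, ?_⟩
        · linear_combination h2 + ε * h1
        · linear_combination h3 + 2 * ε * h2 + (2 * a - p ^ 2 - q ^ 2) * hε + h1
        · linear_combination h4
      · have hpos : 0 < a - 2 * ε * β + c := by
          have : (a - 2 * ε * β + c) * c = (β - ε * c) ^ 2 + 1 := by
            linear_combination h - c ^ 2 * hε
          nlinarith [sq_nonneg (β - ε * c)]
        obtain ⟨p, q, r, s, h1, h2, h3, h4⟩ := ih (β - ε * c).natAbs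
          (by rcases hε' with rfl | rfl <;> omega) (a - 2 * ε * β + c) (β - ε * c) c hpos
          (by linear_combination h - c ^ 2 * hε) rfl
        refine ⟨p + ε * r, q + ε * s, r, s, ?_, ?_, h3, ?_⟩
        · linear_combination h1 + 2 * ε * h2 + (2 * c - r ^ 2 - s ^ 2) * hε + h3
        · linear_combination h2 + ε * h3
        · linear_combination h4

/-- The Gram matrix of a form in `𝒬_{4,10}` is carried to that of `[10, -6, 1]` by an explicit
element of `Γ₀(10)` or of the Atkin–Lehner coset `W₅`. -/
lemma exists_matrix_of_det_eq_one (a β c : ℤ) (ha : 0 < a) (h : a * c - β ^ 2 = 1)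
    (hdvd : (10 : ℤ) ∣ a) :
    (∃ A B C D : ℤ, A * D - B * (10 * C) = 1 ∧
      a = 10 * A ^ 2 - 6 * A * (10 * C) + (10 * C) ^ 2 ∧
      β = 10 * A * B - 3 * (A * D + B * (10 * C)) + 10 * C * D ∧
      c = 10 * B ^ 2 - 6 * B * D + D ^ 2) ∨
    (∃ x y v w : ℤ, 5 * x * w - 2 * y * v = 1 ∧
      5 * a = 10 * (5 * x) ^ 2 - 6 * (5 * x) * (10 * v) + (10 * v) ^ 2 ∧
      5 * β = 10 * (5 * x) * y - 3 * (5 * x * (5 * w) + y * (10 * v)) + 10 * v * (5 * w) ∧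
      5 * c = 10 * y ^ 2 - 6 * y * (5 * w) + (5 * w) ^ 2) := by
  obtain ⟨p, q, r, s, h1, h2, h3, h4⟩ := exists_sum_two_squares_of_det_eq_one a β c ha h
  have key : (10 : ℤ) ∣ 3 * q - p ∨ ((5 : ℤ) ∣ p - 2 * q ∧ (2 : ℤ) ∣ p - q) := by
    rw [h1] at hdvd
    have e1 : (p - q) % 2 = 0 := by
      have : (p ^ 2 + q ^ 2) % 2 = 0 := by omega
      rcases Int.emod_two_eq_zero_or_one p with hp | hp <;>
      rcases Int.emod_two_eq_zero_or_one q with hq | hq <;>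
      simp [pow_two, Int.add_emod, Int.mul_emod, Int.sub_emod, hp, hq] at this ⊢
    have e2 : (5 : ℤ) ∣ (p - 3 * q) * (p - 2 * q) := by
      have : (5 : ℤ) ∣ p ^ 2 + q ^ 2 := (by norm_num : (5 : ℤ) ∣ 10).trans hdvd
      rw [show (p - 3 * q) * (p - 2 * q) = p ^ 2 + q ^ 2 + 5 * (q ^ 2 - p * q) by ring]
      exact dvd_add this (Dvd.intro _ rfl)
    rcases (by norm_num : Prime (5 : ℤ)).dvd_or_dvd e2 with h5 | h5
    · left; omega
    · right; omega
  rcases key with ⟨C, hC⟩ | ⟨⟨x, hx⟩, ⟨v, hv⟩⟩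
  · left
    obtain rfl : p = 3 * q - 10 * C := by linarith
    refine ⟨q, s, C, 3 * s - r, ?_, ?_, ?_, ?_⟩
    · linear_combination h4
    · linear_combination h1
    · linear_combination h2
    · linear_combination h3
  · right
    obtain rfl : q = 2 * v - 5 * x := by linarith
    obtain rfl : p = 4 * v - 5 * x := by linarith
    refine ⟨x, r - 2 * s, v, r - s, ?_, ?_, ?_, ?_⟩
    · linear_combination h4
    · linear_combination 5 * h1
    · linear_combination 5 * h2
    · linear_combination 5 * h3

lemma exists_of_mem_QdN {Q : Matrix (Fin 2) (Fin 2) ℝ} (hQ : Q ∈ QdN 4 10) :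
    ∃ a β c : ℤ, 0 < a ∧ a * c - β ^ 2 = 1 ∧ (10 : ℤ) ∣ a ∧
      Q = !![(a : ℝ), (β : ℝ); (β : ℝ), (c : ℝ)] := by
  obtain ⟨a, b, c, rfl, ha, hdisc, hdvd⟩ := hQ
  have hb : Even b := by
    have : Even (b ^ 2) := ⟨2 * a * c - 2, by linarith⟩
    exact (Int.even_pow.mp this).1
  obtain ⟨β, rfl⟩ := hb
  refine ⟨a, β, c, ha, by linarith [hdisc], by exact_mod_cast hdvd, ?_⟩
  simp [formMat]

lemma cmPointC_of_det_eq_one {a β c : ℤ} (h : a * c - β ^ 2 = 1) :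
    cmPointC !![(a : ℝ), (β : ℝ); (β : ℝ), (c : ℝ)] = (-β + Complex.I) / a := by
  have hdet : (a : ℝ) * c - β * β = 1 := by
    have : ((a * c - β ^ 2 : ℤ) : ℝ) = 1 := by rw [h]; norm_num
    push_cast at this
    linarith
  simp [cmPointC, Matrix.det_fin_two_of, hdet]

lemma linear_cmPoint_div_linear_cmPoint {A B C D e a β : ℤ} (he : e ≠ 0) (ha : 0 < a)
    (hdet : A * D - B * C = e) (h1 : e * a = 10 * A ^ 2 - 6 * A * C + C ^ 2)
    (h2 : e * β = 10 * A * B - 3 * (A * D + B * C) + C * D) :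
    ((A : ℂ) * ((-β + Complex.I) / a) + B) / (C * ((-β + Complex.I) / a) + D) =
      (3 + Complex.I) / 10 := by
  have ha0 : (a : ℂ) ≠ 0 := by exact_mod_cast ha.ne'
  have k1 : D * a - C * β = 10 * A - 3 * C := mul_left_cancel₀ he (by
    linear_combination D * h1 - C * h2 + (10 * A - 3 * C) * hdet)
  have k2 : B * a - A * β = 3 * A - C := mul_left_cancel₀ he (by
    linear_combination B * h1 - A * h2 + (3 * A - C) * hdet)
  have k1' : (D : ℂ) * a - C * β = 10 * A - 3 * C := by exact_mod_cast k1
  have k2' : (B : ℂ) * a - A * β = 3 * A - C := by exact_mod_cast k2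
  have num : (A : ℂ) * ((-β + Complex.I) / a) + B = (A * (3 + Complex.I) - C) / a := by
    field_simp
    linear_combination k2'
  have den : (C : ℂ) * ((-β + Complex.I) / a) + D = (10 * A - (3 - Complex.I) * C) / a := by
    field_simp
    linear_combination k1'
  have hne : (10 * A - (3 - Complex.I) * C : ℂ) ≠ 0 := by
    intro h0
    have him := congrArg Complex.im h0
    have hre := congrArg Complex.re h0
    simp at him hre
    subst him
    have hA : A = 0 := by simpa using hre
    subst hA
    exact he (by simpa using hdet.symm)
  rw [num, den, div_div_div_cancel_right₀ ha0, div_eq_div_iff hne (by norm_num)]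
  linear_combination -(C : ℂ) * Complex.I_sq

lemma etaQuotient_of_det_eq_one {a β c : ℤ} (ha : 0 < a) (h : a * c - β ^ 2 = 1)
    (hdvd : (10 : ℤ) ∣ a) : etaQuotient ((-β + Complex.I) / a) = -4 := by
  have him : 0 < ((-β + Complex.I) / (a : ℂ)).im := by
    have : (0 : ℝ) < a := by exact_mod_cast ha
    simpa [Complex.div_intCast_im] using this
  rcases exists_matrix_of_det_eq_one a β c ha h hdvd with
    ⟨A, B, C, D, hdet, h1, h2, -⟩ | ⟨x, y, v, w, hdet, h1, h2, -⟩
  · rw [← etaQuotient_gamma0 hdet him, ← etaQuotient_cmPoint,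
      ← linear_cmPoint_div_linear_cmPoint (A := A) (B := B) (C := 10 * C) (D := D) (β := β)
        one_ne_zero ha hdet (by linarith) (by linarith)]
    push_cast
    rfl
  · rw [← etaQuotient_atkinLehner_five hdet him, ← etaQuotient_cmPoint,
      ← linear_cmPoint_div_linear_cmPoint (A := 5 * x) (B := y) (C := 10 * v) (D := 5 * w)
        (e := 5) (β := β) (by norm_num) ha (by linarith) (by linarith) (by linarith)]
    push_cast
    rfl

lemma jnStar_ten_cmPointC {Q : Matrix (Fin 2) (Fin 2) ℝ} (hQ : Q ∈ QdN 4 10) :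
    jnStar 10 (cmPointC Q) = -4 := by
  obtain ⟨a, β, c, ha, h, hdvd, rfl⟩ := exists_of_mem_QdN hQ
  rw [cmPointC_of_det_eq_one h, jnStar_ten_eq, etaQuotient_of_det_eq_one ha h hdvd]
  norm_num

lemma formMat_mem_QdN : formMat 10 (-6) 1 ∈ QdN 4 10 :=
  ⟨10, -6, 1, rfl, by norm_num, by norm_num, by norm_num⟩

lemma cmPointC_formMat : cmPointC (formMat 10 (-6) 1) = (3 + Complex.I) / 10 := by
  have h := cmPointC_of_det_eq_one (a := 10) (β := -3) (c := 1) (by norm_num)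
  norm_num [formMat] at h ⊢
  exact h

lemma sqrt_inv_mul_sqrt_inv_of_common_factor (d e f : ℕ) :
    (Real.sqrt (d * e : ℕ))⁻¹ * (Real.sqrt (d * f : ℕ))⁻¹ =
      (Real.sqrt (e * f : ℕ))⁻¹ * (d : ℝ)⁻¹ := by
  rw [← mul_inv, ← mul_inv, ← Real.sqrt_mul (by positivity)]
  congr 1
  rw [show ((d * e : ℕ) : ℝ) * (d * f : ℕ) = (e * f : ℕ) * (d : ℝ) ^ 2 by push_cast; ring,
    Real.sqrt_mul (by positivity), Real.sqrt_sq (by positivity)]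

/-- Up to removing the common square factor, Atkin–Lehner matrices multiply like their indices. -/
lemma mul_mem_atkinLehnerSet {d e f k : ℕ} (hd : d ≠ 0) {g g' : SL2R}
    (hg : g ∈ atkinLehnerSet (d * e * f * k) (d * e))
    (hg' : g' ∈ atkinLehnerSet (d * e * f * k) (d * f)) :
    g * g' ∈ atkinLehnerSet (d * e * f * k) (e * f) := by
  obtain ⟨x, y, z, w, hg⟩ := hg
  obtain ⟨x', y', z', w', hg'⟩ := hg'
  have hd0 : (d : ℝ) ≠ 0 := by exact_mod_cast hd
  refine ⟨x * x' * d + k * y * z', x * y' * e + y * w' * f, z * x' * f + w * z' * e,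
    w * w' * d + k * z * y', ?_⟩
  rw [Matrix.SpecialLinearGroup.coe_mul, hg, hg', Matrix.smul_mul, Matrix.mul_smul, smul_smul,
    sqrt_inv_mul_sqrt_inv_of_common_factor, mul_smul]
  congr 1
  ext i j
  fin_cases i <;> fin_cases j <;> simp <;> field_simp <;> ring

lemma inv_mem_atkinLehnerSet {N e : ℕ} {g : SL2R} (hg : g ∈ atkinLehnerSet N e) :
    g⁻¹ ∈ atkinLehnerSet N e := by
  obtain ⟨x, y, z, w, hg⟩ := hg
  refine ⟨w, -y, -z, x, ?_⟩
  rw [Matrix.SpecialLinearGroup.coe_inv, hg, Matrix.adjugate_fin_two]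
  ext i j
  fin_cases i <;> fin_cases j <;> simp

lemma Gamma0SL2R_subset_atkinLehnerSet (N : ℕ) :
    (Gamma0SL2R N : Set SL2R) ⊆ atkinLehnerSet N 1 := by
  rintro _ ⟨γ, hγ, rfl⟩
  obtain ⟨z, hz⟩ := (ZMod.intCast_zmod_eq_zero_iff_dvd _ N).mp
    (CongruenceSubgroup.Gamma0_mem.mp hγ)
  refine ⟨γ 0 0, γ 0 1, z, γ 1 1, ?_⟩
  ext i j
  fin_cases i <;> fin_cases j <;> simp [hz, mul_comm]

lemma exists_mem_atkinLehnerSet_of_mem_frickeGroup {N : ℕ} (hN : N ≠ 0) {g : SL2R}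
    (hg : g ∈ FrickeGroup N) : ∃ e, e ∣ N ∧ g ∈ atkinLehnerSet N e := by
  induction hg using Subgroup.closure_induction with
  | mem g hg =>
    rcases hg with hg | hg
    · exact ⟨1, one_dvd _, Gamma0SL2R_subset_atkinLehnerSet N hg⟩
    · simp only [Set.mem_iUnion] at hg
      obtain ⟨e, he, hg⟩ := hg
      exact ⟨e, he.1, hg⟩
  | one => exact ⟨1, one_dvd _, Gamma0SL2R_subset_atkinLehnerSet N (one_mem _)⟩
  | mul g g' _ _ ih ih' =>
    obtain ⟨e, he, hg⟩ := ih
    obtain ⟨f, hf, hg'⟩ := ih'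
    have hd : e.gcd f ≠ 0 := Nat.gcd_ne_zero_left (ne_zero_of_dvd_ne_zero hN he)
    obtain ⟨e', he'⟩ := Nat.gcd_dvd_left e f
    obtain ⟨f', hf'⟩ := Nat.gcd_dvd_right e f
    have hlcm : e.lcm f = e.gcd f * e' * f' := by
      apply mul_left_cancel₀ hd
      calc e.gcd f * e.lcm f = e * f := Nat.gcd_mul_lcm e f
        _ = e.gcd f * e' * (e.gcd f * f') := congrArg₂ (· * ·) he' hf'
        _ = e.gcd f * (e.gcd f * e' * f') := by ring
    obtain ⟨k, hk⟩ := Nat.lcm_dvd he hf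
    rw [hlcm] at hk
    generalize e.gcd f = d at *
    subst he' hf' hk
    exact ⟨e' * f', ⟨d * k, by ring⟩, mul_mem_atkinLehnerSet hd hg hg'⟩
  | inv g _ ih =>
    obtain ⟨e, he, hg⟩ := ih
    exact ⟨e, he, inv_mem_atkinLehnerSet hg⟩

lemma transpose_mul_formMat_mul {e : ℕ} (A B C D : ℝ) :
    ((Real.sqrt e)⁻¹ • !![A, B; C, D])ᵀ * formMat 10 (-6) 1 * ((Real.sqrt e)⁻¹ • !![A, B; C, D]) =
      (e : ℝ)⁻¹ • !![10 * A ^ 2 - 6 * A * C + C ^ 2, 10 * A * B - 3 * (A * D + B * C) + C * D;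
        10 * A * B - 3 * (A * D + B * C) + C * D, 10 * B ^ 2 - 6 * B * D + D ^ 2] := by
  rw [Matrix.transpose_smul, Matrix.smul_mul, Matrix.mul_smul, Matrix.smul_mul, smul_smul,
    ← mul_inv, Real.mul_self_sqrt (by positivity)]
  congr 1
  ext i j
  fin_cases i <;> fin_cases j <;> simp [Matrix.mul_apply, formMat] <;> ring

lemma det_sqrt_inv_smul {e : ℕ} (he : e ≠ 0) {A B C D : ℝ} (h : A * D - B * C = e) :
    ((Real.sqrt e)⁻¹ • !![A, B; C, D]).det = 1 := by
  have he0 : (e : ℝ) ≠ 0 := by exact_mod_cast he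
  rw [Matrix.det_smul, Matrix.det_fin_two_of, h, Fintype.card_fin, inv_pow,
    Real.sq_sqrt (by positivity), inv_mul_cancel₀ he0]

lemma mem_frickeGroup_of_mem_atkinLehnerSet {N e : ℕ} {g : SL2R} (he : e ∣ N)
    (hcop : Nat.Coprime e (N / e)) (hg : g ∈ atkinLehnerSet N e) : g ∈ FrickeGroup N :=
  Subgroup.subset_closure (.inr (Set.mem_biUnion ⟨he, hcop⟩ hg))

lemma exists_mem_frickeGroup_formMat {Q : Matrix (Fin 2) (Fin 2) ℝ} (hQ : Q ∈ QdN 4 10) :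
    ∃ g ∈ FrickeGroup 10, Q = (g.1)ᵀ * formMat 10 (-6) 1 * g.1 := by
  obtain ⟨a, β, c, ha, h, hdvd, rfl⟩ := exists_of_mem_QdN hQ
  rcases exists_matrix_of_det_eq_one a β c ha h hdvd with
    ⟨A, B, C, D, hdet, h1, h2, h3⟩ | ⟨x, y, v, w, hdet, h1, h2, h3⟩
  · refine ⟨⟨(Real.sqrt (1 : ℕ))⁻¹ • !![(A : ℝ), (B : ℝ); 10 * (C : ℝ), (D : ℝ)],
      det_sqrt_inv_smul one_ne_zero (by exact_mod_cast hdet)⟩,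
      mem_frickeGroup_of_mem_atkinLehnerSet (e := 1) (by norm_num) (by norm_num)
        ⟨A, B, C, D, by simp [mul_comm]⟩, ?_⟩
    rw [transpose_mul_formMat_mul]
    simp [h1, h2, h3]
  · have hdet' : (5 : ℝ) * x * w - 2 * y * v = 1 := by exact_mod_cast hdet
    have h1' : (5 : ℝ) * a = 10 * (5 * x) ^ 2 - 6 * (5 * x) * (10 * v) + (10 * v) ^ 2 := by
      exact_mod_cast h1
    have h2' : (5 : ℝ) * β =
        10 * (5 * x) * y - 3 * (5 * x * (5 * w) + y * (10 * v)) + 10 * v * (5 * w) := by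
      exact_mod_cast h2
    have h3' : (5 : ℝ) * c = 10 * y ^ 2 - 6 * y * (5 * w) + (5 * w) ^ 2 := by
      exact_mod_cast h3
    refine ⟨⟨(Real.sqrt (5 : ℕ))⁻¹ • !![5 * (x : ℝ), (y : ℝ); 10 * (v : ℝ), 5 * (w : ℝ)],
      det_sqrt_inv_smul (by norm_num) (by push_cast; linear_combination 5 * hdet')⟩,
      mem_frickeGroup_of_mem_atkinLehnerSet (e := 5) (by norm_num) (by norm_num)
        ⟨x, y, v, w, by simp [mul_comm]⟩, ?_⟩
    rw [transpose_mul_formMat_mul, ← h1', ← h2', ← h3']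
    simp

/-- The nonzero integer pairs of sup norm one: they parametrize the stabilizer of `[10, -6, 1]`. -/
noncomputable def stabilizerIndex : Finset (ℤ × ℤ) :=
  (Finset.Icc (-1) 1 ×ˢ Finset.Icc (-1) 1).erase (0, 0)

/-- The matrix `e^{-1/2} [[T + 3U, -U], [10U, T - 3U]]`, where `e = T² + U²`, attached to the pair
`(T, U)`. -/
noncomputable def stabilizerMatrix (p : ℤ × ℤ) : Matrix (Fin 2) (Fin 2) ℝ :=
  (Real.sqrt (p.1 ^ 2 + p.2 ^ 2).natAbs)⁻¹ •
    !![(p.1 + 3 * p.2 : ℝ), -p.2; 10 * p.2, p.1 - 3 * p.2]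

lemma natAbs_sq_add_sq_cast (p : ℤ × ℤ) :
    (((p.1 ^ 2 + p.2 ^ 2).natAbs : ℕ) : ℝ) = (p.1 : ℝ) ^ 2 + (p.2 : ℝ) ^ 2 := by
  rw [Nat.cast_natAbs, abs_of_nonneg (by positivity)]
  push_cast
  rfl

lemma natAbs_sq_add_sq_ne_zero {p : ℤ × ℤ} (hp : p ∈ stabilizerIndex) :
    (p.1 ^ 2 + p.2 ^ 2).natAbs ≠ 0 := by
  revert p
  decide

lemma det_stabilizerMatrix {p : ℤ × ℤ} (hp : p ∈ stabilizerIndex) :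
    (stabilizerMatrix p).det = 1 :=
  det_sqrt_inv_smul (natAbs_sq_add_sq_ne_zero hp) (by rw [natAbs_sq_add_sq_cast]; ring)

lemma stabilizerMatrix_mem_frickeGroup {p : ℤ × ℤ} (hp : p ∈ stabilizerIndex) :
    (⟨stabilizerMatrix p, det_stabilizerMatrix hp⟩ : SL2R) ∈ FrickeGroup 10 := by
  have key : ∀ p ∈ stabilizerIndex, (p.1 ^ 2 + p.2 ^ 2).natAbs ∣ 10 ∧
      Nat.Coprime (p.1 ^ 2 + p.2 ^ 2).natAbs (10 / (p.1 ^ 2 + p.2 ^ 2).natAbs) ∧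
      ((p.1 ^ 2 + p.2 ^ 2).natAbs : ℤ) ∣ p.1 + 3 * p.2 ∧
      ((p.1 ^ 2 + p.2 ^ 2).natAbs : ℤ) ∣ p.1 - 3 * p.2 := by decide
  obtain ⟨h1, h2, ⟨x, hx⟩, ⟨w, hw⟩⟩ := key p hp
  refine mem_frickeGroup_of_mem_atkinLehnerSet h1 h2 ⟨x, -p.2, p.2, w, ?_⟩
  have hx' : (p.1 + 3 * p.2 : ℝ) = x * (p.1 ^ 2 + p.2 ^ 2).natAbs := by
    rw [mul_comm (x : ℝ), ← Int.cast_natCast (R := ℝ)]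
    exact_mod_cast hx
  have hw' : (p.1 - 3 * p.2 : ℝ) = w * (p.1 ^ 2 + p.2 ^ 2).natAbs := by
    rw [mul_comm (w : ℝ), ← Int.cast_natCast (R := ℝ)]
    exact_mod_cast hw
  rw [← hx', ← hw']
  simp [stabilizerMatrix, mul_comm]

lemma transpose_stabilizerMatrix_mul {p : ℤ × ℤ} (hp : p ∈ stabilizerIndex) :
    (stabilizerMatrix p)ᵀ * formMat 10 (-6) 1 * stabilizerMatrix p = formMat 10 (-6) 1 := by
  have he : (p.1 : ℝ) ^ 2 + (p.2 : ℝ) ^ 2 ≠ 0 := by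
    rw [← natAbs_sq_add_sq_cast]
    exact_mod_cast natAbs_sq_add_sq_ne_zero hp
  rw [stabilizerMatrix, transpose_mul_formMat_mul, natAbs_sq_add_sq_cast, inv_smul_eq_iff₀ he]
  ext i j
  fin_cases i <;> fin_cases j <;> simp [formMat] <;> ring

lemma stabilizerMatrix_injOn : Set.InjOn stabilizerMatrix stabilizerIndex := by
  have key : ∀ {p p' : ℤ × ℤ}, p ∈ stabilizerIndex → p' ∈ stabilizerIndex →
      stabilizerMatrix p = stabilizerMatrix p' →
      (0 < p.1 → 0 < p'.1) ∧ (p.1 < 0 → p'.1 < 0) ∧ (0 < p.2 → 0 < p'.2) ∧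
        (p.2 < 0 → p'.2 < 0) := by
    intro p p' hp hp' h
    have hs : 0 < (Real.sqrt (p.1 ^ 2 + p.2 ^ 2).natAbs)⁻¹ := by
      have := Nat.pos_of_ne_zero (natAbs_sq_add_sq_ne_zero hp)
      positivity
    have hs' : 0 < (Real.sqrt (p'.1 ^ 2 + p'.2 ^ 2).natAbs)⁻¹ := by
      have := Nat.pos_of_ne_zero (natAbs_sq_add_sq_ne_zero hp')
      positivity
    have h00 := congrFun (congrFun h 0) 0
    have h01 := congrFun (congrFun h 0) 1
    simp only [stabilizerMatrix] at h00 h01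
    generalize (Real.sqrt (p.1 ^ 2 + p.2 ^ 2).natAbs)⁻¹ = s at *
    generalize (Real.sqrt (p'.1 ^ 2 + p'.2 ^ 2).natAbs)⁻¹ = s' at *
    simp at h00 h01
    have h1 : s * p.1 = s' * p'.1 := by linear_combination h00 - 3 * h01
    refine ⟨fun hlt => ?_, fun hlt => ?_, fun hlt => ?_, fun hlt => ?_⟩
    · have : (0 : ℝ) < s' * p'.1 := h1 ▸ mul_pos hs (by exact_mod_cast hlt)
      exact_mod_cast pos_of_mul_pos_right this hs'.le
    · have : s' * (p'.1 : ℝ) < 0 := h1 ▸ mul_neg_of_pos_of_neg hs (by exact_mod_cast hlt)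
      exact_mod_cast neg_of_mul_neg_right this hs'.le
    · have : (0 : ℝ) < s' * p'.2 := h01 ▸ mul_pos hs (by exact_mod_cast hlt)
      exact_mod_cast pos_of_mul_pos_right this hs'.le
    · have : s' * (p'.2 : ℝ) < 0 := h01 ▸ mul_neg_of_pos_of_neg hs (by exact_mod_cast hlt)
      exact_mod_cast neg_of_mul_neg_right this hs'.le
  intro p hp p' hp' h
  have h1 := key hp hp' h
  have h2 := key hp' hp h.symm
  simp only [stabilizerIndex, Finset.coe_erase, Finset.coe_product, Finset.coe_Icc, Set.mem_sdiff,
    Set.mem_prod, Set.mem_Icc] at hp hp'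
  ext <;> omega

lemma exists_eq_stabilizerMatrix {g : SL2R} (hg : g ∈ FrickeGroup 10)
    (hstab : (g.1)ᵀ * formMat 10 (-6) 1 * g.1 = formMat 10 (-6) 1) :
    ∃ p ∈ stabilizerIndex, stabilizerMatrix p = g.1 := by
  obtain ⟨e, he, x, y, z, w, hgm⟩ := exists_mem_atkinLehnerSet_of_mem_frickeGroup (by norm_num) hg
  have he0 : e ≠ 0 := by rintro rfl; norm_num at he
  have heR : (e : ℝ) ≠ 0 := by exact_mod_cast he0
  have heZ : (e : ℤ) ≠ 0 := by exact_mod_cast he0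
  have hdetR : (x : ℝ) * e * (w * e) - y * (z * (10 : ℕ)) = e := by
    have := g.2
    rw [hgm, Matrix.det_smul, Matrix.det_fin_two_of, Fintype.card_fin, inv_pow,
      Real.sq_sqrt (by positivity), inv_mul_eq_iff_eq_mul₀ heR] at this
    linarith
  have hdet : x * e * (w * e) - y * (z * 10) = e := by exact_mod_cast hdetR
  rw [hgm, transpose_mul_formMat_mul, inv_smul_eq_iff₀ heR] at hstab
  have h00 := congrFun (congrFun hstab 0) 0
  have h01 := congrFun (congrFun hstab 0) 1
  simp [formMat] at h00 h01
  have h1 : (e : ℤ) * 10 = 10 * (x * e) ^ 2 - 6 * (x * e) * (z * 10) + (z * 10) ^ 2 := by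
    have : (e : ℝ) * 10 = 10 * (x * e) ^ 2 - 6 * (x * e) * (z * 10) + (z * 10) ^ 2 := by
      linarith
    exact_mod_cast this
  have h2 : (e : ℤ) * (-3) =
      10 * (x * e) * y - 3 * (x * e * (w * e) + y * (z * 10)) + z * 10 * (w * e) := by
    have : (e : ℝ) * (-3) =
      10 * (x * e) * y - 3 * (x * e * (w * e) + y * (z * 10)) + z * 10 * (w * e) := by
      linarith
    exact_mod_cast this
  have k1 : w * e * 10 - z * 10 * (-3) = 10 * (x * e) - 3 * (z * 10) := mul_left_cancel₀ heZ (by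
    linear_combination (w * e) * h1 - (z * 10) * h2 + (10 * (x * e) - 3 * (z * 10)) * hdet)
  have k2 : y * 10 - x * e * (-3) = 3 * (x * e) - z * 10 := mul_left_cancel₀ heZ (by
    linear_combination y * h1 - x * e * h2 + (3 * (x * e) - z * 10) * hdet)
  obtain rfl : y = -z := by linarith
  set T := x * e - 3 * z with hT
  have hw : w * e = T - 3 * z := by linarith
  have hx : x * e = T + 3 * z := by linarith
  have hsum : T ^ 2 + z ^ 2 = e := by rw [← hdet, hx, hw]; ring
  have hmem : (T, z) ∈ stabilizerIndex := by
    have hbound : (e : ℤ) ≤ 2 := by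
      have hle := Nat.le_of_dvd (by norm_num) he
      by_contra! hlt
      have h5 : (5 : ℤ) ∣ e := by interval_cases e <;> omega
      obtain ⟨t, ht⟩ : (5 : ℤ) ∣ T := by
        have := hx ▸ h5.mul_left x
        have := hw ▸ h5.mul_left w
        omega
      obtain ⟨u, hu⟩ : (5 : ℤ) ∣ z := by
        have := hx ▸ h5.mul_left x
        have := hw ▸ h5.mul_left w
        omega
      rw [ht, hu] at hsum
      have : 25 * (t ^ 2 + u ^ 2) = (e : ℤ) := by linarith
      omega
    simp only [stabilizerIndex, Finset.mem_erase, Finset.mem_product, Finset.mem_Icc, ne_eq,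
      Prod.mk.injEq]
    refine ⟨?_, ⟨?_, ?_⟩, ?_, ?_⟩
    · rintro ⟨h0, h0'⟩
      exact heZ (by rw [← hsum, h0, h0']; norm_num)
    all_goals nlinarith
  refine ⟨(T, z), hmem, ?_⟩
  have hxR : (x : ℝ) * e = T + 3 * z := by exact_mod_cast hx
  have hwR : (w : ℝ) * e = T - 3 * z := by exact_mod_cast hw
  rw [hgm, stabilizerMatrix, hsum, hxR, hwR]
  simp [mul_comm]

lemma stabOrder_formMat : stabOrder (FrickeGroup 10) (formMat 10 (-6) 1) = 4 := by
  let F : stabilizerIndex → { g : SL2R // g ∈ FrickeGroup 10 ∧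
      (g.1)ᵀ * formMat 10 (-6) 1 * g.1 = formMat 10 (-6) 1 } := fun p =>
    ⟨⟨stabilizerMatrix p, det_stabilizerMatrix p.2⟩, stabilizerMatrix_mem_frickeGroup p.2,
      transpose_stabilizerMatrix_mul p.2⟩
  have hF : Function.Bijective F := by
    constructor
    · intro p p' h
      exact Subtype.ext (stabilizerMatrix_injOn p.2 p'.2
        (congrArg (fun g : { g : SL2R // _ } => g.1.1) h))
    · rintro ⟨g, hg, hstab⟩
      obtain ⟨p, hp, hpg⟩ := exists_eq_stabilizerMatrix hg hstab
      exact ⟨⟨p, hp⟩, Subtype.ext (Subtype.ext hpg)⟩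
  have hcard : stabilizerIndex.card = 8 := by decide
  rw [stabOrder, ← Nat.card_congr (Equiv.ofBijective F hF), Nat.card_eq_fintype_card,
    Fintype.card_coe, hcard]

lemma stabOrder_transpose_mul_mul (Γ : Subgroup SL2R) (M : Matrix (Fin 2) (Fin 2) ℝ) {k : SL2R}
    (hk : k ∈ Γ) : stabOrder Γ ((k.1)ᵀ * M * k.1) = stabOrder Γ M := by
  have hkk : k.1 * (k⁻¹).1 = 1 := by
    rw [← Matrix.SpecialLinearGroup.coe_mul, mul_inv_cancel, Matrix.SpecialLinearGroup.coe_one]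
  have hinj : ∀ X Y : Matrix (Fin 2) (Fin 2) ℝ,
      (k.1)ᵀ * X * k.1 = (k.1)ᵀ * Y * k.1 ↔ X = Y := by
    have hcancel : ∀ X : Matrix (Fin 2) (Fin 2) ℝ,
        ((k⁻¹).1)ᵀ * ((k.1)ᵀ * X * k.1) * (k⁻¹).1 = X := fun X => by
      calc _ = (k.1 * (k⁻¹).1)ᵀ * X * (k.1 * (k⁻¹).1) := by
            simp only [Matrix.transpose_mul, Matrix.mul_assoc]
        _ = X := by rw [hkk]; simp
    exact fun X Y => ⟨fun h => by rw [← hcancel X, h, hcancel], fun h => h ▸ rfl⟩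
  unfold stabOrder
  congr 1
  refine (Nat.card_congr ((MulAut.conj k⁻¹).toEquiv.subtypeEquiv fun g => ?_)).symm
  have hconj : k * (k⁻¹ * g * k) = g * k := by group
  have hmat : k.1 * (k⁻¹ * g * k).1 = g.1 * k.1 := by
    rw [← Matrix.SpecialLinearGroup.coe_mul, hconj, Matrix.SpecialLinearGroup.coe_mul]
  have hform : ((k⁻¹ * g * k).1)ᵀ * ((k.1)ᵀ * M * k.1) * (k⁻¹ * g * k).1 =
      (k.1)ᵀ * ((g.1)ᵀ * M * g.1) * k.1 := by
    calc _ = (k.1 * (k⁻¹ * g * k).1)ᵀ * M * (k.1 * (k⁻¹ * g * k).1) := by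
          simp only [Matrix.transpose_mul, Matrix.mul_assoc]
      _ = _ := by rw [hmat]; simp only [Matrix.transpose_mul, Matrix.mul_assoc]
  simp only [MulEquiv.toEquiv_eq_coe, MulEquiv.coe_toEquiv, MulAut.conj_apply, inv_inv]
  rw [hform, hinj, Γ.mul_mem_cancel_right hk, Γ.mul_mem_cancel_left (Γ.inv_mem hk)]

lemma formRel_of_mem_QdN (Q Q' : QdN 4 10) : formRel (FrickeGroup 10) (QdN 4 10) Q Q' := by
  obtain ⟨g, hg, hQ⟩ := exists_mem_frickeGroup_formMat Q.2
  obtain ⟨g', hg', hQ'⟩ := exists_mem_frickeGroup_formMat Q'.2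
  refine ⟨g⁻¹ * g', mul_mem (inv_mem hg) hg', ?_⟩
  have hmat : g.1 * (g⁻¹ * g').1 = g'.1 := by
    rw [← Matrix.SpecialLinearGroup.coe_mul, mul_inv_cancel_left]
  rw [hQ', hQ, ← hmat]
  simp only [Matrix.transpose_mul, Matrix.mul_assoc]

lemma t2Star_ten_four : t2Star 10 (Polynomial.X ^ 2 - Polynomial.C 44) 4 = -7 := by
  have hsub : Subsingleton (Quot (formRel (FrickeGroup 10) (QdN 4 10))) :=
    ⟨Quot.ind fun Q => Quot.ind fun Q' => Quot.sound (formRel_of_mem_QdN Q Q')⟩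
  have huniq : Unique (Quot (formRel (FrickeGroup 10) (QdN 4 10))) :=
    uniqueOfSubsingleton (Quot.mk _ ⟨_, formMat_mem_QdN⟩)
  have hstab : ∀ Q ∈ QdN 4 10, stabOrder (FrickeGroup 10) Q = 4 := by
    intro Q hQ
    obtain ⟨g, hg, rfl⟩ := exists_mem_frickeGroup_formMat hQ
    rw [stabOrder_transpose_mul_mul _ _ hg, stabOrder_formMat]
  rw [t2Star, if_pos (by norm_num), classTrace, finsum_unique, hstab _ (Subtype.prop _),
    jnStar_ten_cmPointC (Subtype.prop _)]
  norm_num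

/-- **CM value at level 10.** `j₁₀*((3 + i)/10) = -4`; moreover `(3 + i)/10` is the CM point
of `Q = [10,-6,1]` of discriminant `-4`, whose class `𝒬_{4,10}/Γ₀*(10)` is a single orbit with
`|Γ̄₀*(10)_Q| = 4`, and with `φ₂(j₁₀*) = (j₁₀*)² - 44` one gets
`t₂^{(10*)}(4) = ((-4)² - 44)/4 = -7`. -/
theorem cm_value_level_ten :
    jnStar 10 ((3 + Complex.I) / 10) = -4 ∧
    cmPointC (formMat 10 (-6) 1) = (3 + Complex.I) / 10 ∧
    formMat 10 (-6) 1 ∈ QdN 4 10 ∧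
    (∀ Q ∈ QdN 4 10, ∃ g ∈ FrickeGroup 10, Q = (g.1)ᵀ * formMat 10 (-6) 1 * g.1) ∧
    stabOrder (FrickeGroup 10) (formMat 10 (-6) 1) = 4 ∧
    t2Star 10 (Polynomial.X ^ 2 - Polynomial.C 44) 4 = -7 := by
  refine ⟨?_, cmPointC_formMat, formMat_mem_QdN, fun Q hQ => exists_mem_frickeGroup_formMat hQ,
    stabOrder_formMat, t2Star_ten_four⟩
  rw [← cmPointC_formMat]
  exact jnStar_ten_cmPointC formMat_mem_QdN
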